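/- Dirichlet's integral formula: for positive reals a_1,...,a_d, p_1,...,p_d, α_1,...,α_d, the integral over the region V = {x_i ≥ 0 : Σ_i (x_i/a_i)^{p_i} ≤ 1} of ∏_j x_j^{α_j - 1} equals (a_1^{α_1}⋯a_d^{α_d})/(p_1⋯p_d) · Γ(α_1/p_1)⋯Γ(α_d/p_d)/Γ(1 + α_1/p_1 + ⋯ + α_d/p_d). -/

import Mathlib

open MeasureTheory Finset

/-- the integrand on the region of level `t`, as an extended nonnegative function -/
noncomputable def dirK {d : ℕ} (a p α : Fin d → ℝ) (t : ℝ) (x : Fin d → ℝ) : ENNReal :=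
  Set.indicator {x : Fin d → ℝ | (∀ i, 0 ≤ x i) ∧ ∑ i, (x i / a i) ^ p i ≤ t}
    (fun x => ENNReal.ofReal (∏ j, x j ^ (α j - 1))) x

lemma dirK_measurable {d : ℕ} (a p α : Fin d → ℝ) :
    Measurable (fun z : (Fin d → ℝ) × ℝ => dirK a p α z.2 z.1) := by
  have hS : MeasurableSet {z : (Fin d → ℝ) × ℝ |
      (∀ i, 0 ≤ z.1 i) ∧ ∑ i, (z.1 i / a i) ^ p i ≤ z.2} := by
    have h1 : MeasurableSet (⋂ i, {z : (Fin d → ℝ) × ℝ | 0 ≤ z.1 i}) :=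
      MeasurableSet.iInter fun i => measurableSet_le measurable_const (by fun_prop)
    have h2 : MeasurableSet {z : (Fin d → ℝ) × ℝ | ∑ i, (z.1 i / a i) ^ p i ≤ z.2} :=
      measurableSet_le (by fun_prop) (by fun_prop)
    convert h1.inter h2 using 1
    ext z
    simp
  have hm : Measurable (fun z : (Fin d → ℝ) × ℝ =>
      ENNReal.ofReal (∏ j, z.1 j ^ (α j - 1))) := by fun_prop
  exact hm.indicator hS

lemma dirK_scale {d : ℕ} (a p α : Fin d → ℝ)
    (ha : ∀ i, 0 < a i) (hp : ∀ i, 0 < p i) {t : ℝ} (ht : 0 < t) :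
    ∫⁻ x, dirK a p α t x =
      ENNReal.ofReal (t ^ (∑ j, α j / p j)) * ∫⁻ x, dirK a p α 1 x := by
  set D : Fin d → ℝ := fun i => t ^ (1 / p i) with hD
  have hDpos : ∀ i, 0 < D i := fun i => Real.rpow_pos_of_pos ht _
  have hdet : (Matrix.diagonal D).det = ∏ i, D i := Matrix.det_diagonal
  have hdet0 : 0 < ∏ i, D i := Finset.prod_pos fun i _ => hDpos i
  have hmeas := Real.smul_map_diagonal_volume_pi (D := D) (by rw [hdet]; exact hdet0.ne')
  have hK : Measurable (dirK a p α t) := by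
    have := (dirK_measurable a p α).comp (measurable_id.prodMk (measurable_const (a := t)))
    exact this
  have hK1 : Measurable (dirK a p α 1) := by
    have := (dirK_measurable a p α).comp (measurable_id.prodMk (measurable_const (a := (1:ℝ))))
    exact this
  have hpt : ∀ y : Fin d → ℝ, dirK a p α t (Matrix.toLin' (Matrix.diagonal D) y)
      = ENNReal.ofReal (∏ i, D i ^ (α i - 1)) * dirK a p α 1 y := by
    intro y
    have hy : (Matrix.toLin' (Matrix.diagonal D) y) = fun i => D i * y i := by
      ext i; simp [Matrix.mulVec_diagonal]
    rw [hy]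
    have hnn : (∀ i, 0 ≤ D i * y i) ↔ ∀ i, 0 ≤ y i :=
      forall_congr' fun i => mul_nonneg_iff_of_pos_left (hDpos i)
    unfold dirK
    by_cases h0 : ∀ i, 0 ≤ y i
    · have hg : ∑ i, (D i * y i / a i) ^ p i = t * ∑ i, (y i / a i) ^ p i := by
        rw [Finset.mul_sum]
        refine Finset.sum_congr rfl fun i _ => ?_
        rw [mul_div_assoc, Real.mul_rpow (hDpos i).le (div_nonneg (h0 i) (ha i).le), hD]
        simp only
        rw [← Real.rpow_mul ht.le, one_div_mul_cancel (hp i).ne', Real.rpow_one]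
      have hle : (t * ∑ i, (y i / a i) ^ p i ≤ t) ↔ ∑ i, (y i / a i) ^ p i ≤ 1 := by
        constructor
        · intro h
          by_contra hc
          push Not at hc
          nlinarith
        · intro h; nlinarith
      have hprod : ∏ i, (D i * y i) ^ (α i - 1)
          = (∏ i, D i ^ (α i - 1)) * ∏ i, y i ^ (α i - 1) := by
        rw [← Finset.prod_mul_distrib]
        exact Finset.prod_congr rfl fun i _ => Real.mul_rpow (hDpos i).le (h0 i)
      have hnonneg : 0 ≤ ∏ i, D i ^ (α i - 1) :=
        Finset.prod_nonneg fun i _ => Real.rpow_nonneg (hDpos i).le _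
      by_cases h1 : ∑ i, (y i / a i) ^ p i ≤ 1
      · rw [Set.indicator_of_mem, Set.indicator_of_mem, hprod, ENNReal.ofReal_mul hnonneg]
        · exact ⟨h0, h1⟩
        · exact ⟨hnn.2 h0, by rw [hg]; exact hle.2 h1⟩
      · rw [Set.indicator_of_notMem, Set.indicator_of_notMem, mul_zero]
        · exact fun h => h1 h.2
        · exact fun h => h1 (hle.1 (by rw [← hg]; exact h.2))
    · rw [Set.indicator_of_notMem, Set.indicator_of_notMem, mul_zero]
      · exact fun h => h0 h.1
      · exact fun h => h0 (hnn.1 h.1)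
  have hlin : Measurable (Matrix.toLin' (Matrix.diagonal D)) :=
    (LinearMap.continuous_of_finiteDimensional _).measurable
  conv_lhs => rw [← hmeas]
  rw [lintegral_smul_measure, lintegral_map hK hlin]
  simp_rw [hpt]
  rw [lintegral_const_mul _ hK1, smul_eq_mul, ← mul_assoc, hdet, abs_of_pos hdet0,
    ← ENNReal.ofReal_mul hdet0.le, ← Finset.prod_mul_distrib]
  congr 2
  rw [Real.rpow_sum_of_pos ht]
  refine Finset.prod_congr rfl fun i _ => ?_
  have : D i * D i ^ (α i - 1) = D i ^ α i := by
    nth_rewrite 1 [← Real.rpow_one (D i)]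
    rw [← Real.rpow_add (hDpos i)]; congr 1; ring
  rw [this, hD]
  simp only
  rw [← Real.rpow_mul ht.le]; congr 1; ring

lemma dir_inner {d : ℕ} (a p α : Fin d → ℝ) (ha : ∀ i, 0 < a i) (x : Fin d → ℝ) :
    ∫⁻ t in Set.Ioi (0:ℝ), ENNReal.ofReal (Real.exp (-t)) * dirK a p α t x =
      ENNReal.ofReal (∏ j, Set.indicator (Set.Ici (0:ℝ))
        (fun u => u ^ (α j - 1) * Real.exp (- (a j ^ (-p j)) * u ^ p j)) (x j)) := by
  by_cases h0 : ∀ i, 0 ≤ x i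
  · set g := ∑ i, (x i / a i) ^ p i with hg
    have hg0 : 0 ≤ g := Finset.sum_nonneg fun i _ =>
      Real.rpow_nonneg (div_nonneg (h0 i) (ha i).le) _
    set w := ∏ j, x j ^ (α j - 1) with hw
    have hw0 : 0 ≤ w := Finset.prod_nonneg fun i _ => Real.rpow_nonneg (h0 i) _
    have hK : ∀ t, ENNReal.ofReal (Real.exp (-t)) * dirK a p α t x =
        (Set.Ici g).indicator
          (fun t => ENNReal.ofReal w * ENNReal.ofReal (Real.exp (-t))) t := by
      intro t
      unfold dirK
      by_cases h : g ≤ t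
      · rw [Set.indicator_of_mem, Set.indicator_of_mem, mul_comm]
        · exact h
        · exact ⟨h0, h⟩
      · rw [Set.indicator_of_notMem, Set.indicator_of_notMem, mul_zero]
        · exact h
        · exact fun h' => h h'.2
    simp_rw [hK]
    rw [Measure.restrict_congr_set Ioi_ae_eq_Ici, lintegral_indicator measurableSet_Ici,
      Measure.restrict_restrict measurableSet_Ici,
      Set.inter_eq_left.2 (Set.Ici_subset_Ici.2 hg0),
      lintegral_const_mul _ (by fun_prop), ← Measure.restrict_congr_set Ioi_ae_eq_Ici,
      ← ofReal_integral_eq_lintegral_ofReal (integrableOn_exp_neg_Ioi g)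
        (Filter.Eventually.of_forall fun t => (Real.exp_pos _).le),
      integral_exp_neg_Ioi, ← ENNReal.ofReal_mul hw0]
    congr 1
    rw [hw, hg, ← Finset.sum_neg_distrib, Real.exp_sum, ← Finset.prod_mul_distrib]
    refine Finset.prod_congr rfl fun i _ => ?_
    rw [Set.indicator_of_mem (show x i ∈ Set.Ici (0:ℝ) from h0 i),
      Real.div_rpow (h0 i) (ha i).le, Real.rpow_neg (ha i).le]
    congr 2
    ring
  · have : ∀ t, dirK a p α t x = 0 := fun t =>
      Set.indicator_of_notMem (fun h => h0 h.1) _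
    simp only [this, mul_zero, lintegral_zero]
    push Not at h0
    obtain ⟨i, hi⟩ := h0
    rw [Finset.prod_eq_zero (Finset.mem_univ i), ENNReal.ofReal_zero]
    exact Set.indicator_of_notMem (by simpa using hi) _

lemma dir_total {d : ℕ} (a p α : Fin d → ℝ)
    (ha : ∀ i, 0 < a i) (hp : ∀ i, 0 < p i) (hα : ∀ i, 0 < α i) :
    ∫⁻ x : Fin d → ℝ, ENNReal.ofReal (∏ j, Set.indicator (Set.Ici (0:ℝ))
        (fun u => u ^ (α j - 1) * Real.exp (- (a j ^ (-p j)) * u ^ p j)) (x j)) =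
      ENNReal.ofReal (∏ j, (a j ^ α j / p j * Real.Gamma (α j / p j))) := by
  have hb : ∀ j, 0 < a j ^ (-p j) := fun j => Real.rpow_pos_of_pos (ha j) _
  have hint : ∀ j, Integrable (Set.indicator (Set.Ici (0:ℝ))
        (fun u => u ^ (α j - 1) * Real.exp (- (a j ^ (-p j)) * u ^ p j))) := by
    intro j
    rw [integrable_indicator_iff measurableSet_Ici, integrableOn_Ici_iff_integrableOn_Ioi]
    exact integrableOn_rpow_mul_exp_neg_mul_rpow (by linarith [hα j]) (hp j) (hb j)
  rw [← ofReal_integral_eq_lintegral_ofReal]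
  · congr 1
    rw [integral_fintype_prod_volume_eq_prod (f := fun j => Set.indicator (Set.Ici (0:ℝ))
        (fun u => u ^ (α j - 1) * Real.exp (- (a j ^ (-p j)) * u ^ p j)))]
    refine Finset.prod_congr rfl fun j _ => ?_
    rw [integral_indicator measurableSet_Ici, integral_Ici_eq_integral_Ioi,
      integral_rpow_mul_exp_neg_mul_rpow (hp j) (by linarith [hα j]) (hb j),
      ← Real.rpow_mul (ha j).le, sub_add_cancel]
    have h1 : -p j * (-(α j) / p j) = α j := by field_simp [(hp j).ne']
    rw [h1]
    ring
  · exact Integrable.fintype_prod hint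
  · refine Filter.Eventually.of_forall fun x => Finset.prod_nonneg fun j _ => ?_
    refine Set.indicator_nonneg (fun u hu => ?_) _
    exact mul_nonneg (Real.rpow_nonneg hu _) (Real.exp_pos _).le

theorem stmt_16 (d : ℕ) (a p α : Fin d → ℝ)
    (ha : ∀ i, 0 < a i) (hp : ∀ i, 0 < p i) (hα : ∀ i, 0 < α i) :
    ∫ x in {x : Fin d → ℝ | (∀ i, 0 ≤ x i) ∧ ∑ i, (x i / a i) ^ p i ≤ 1},
        ∏ j, x j ^ (α j - 1) =
      (∏ j, a j ^ α j) / (∏ j, p j) *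
        ((∏ j, Real.Gamma (α j / p j)) / Real.Gamma (1 + ∑ j, α j / p j)) := by
  set s := ∑ j, α j / p j with hs
  have hs0 : 0 ≤ s := Finset.sum_nonneg fun j _ => (div_pos (hα j) (hp j)).le
  have hS : MeasurableSet {x : Fin d → ℝ | (∀ i, 0 ≤ x i) ∧ ∑ i, (x i / a i) ^ p i ≤ 1} := by
    have h1 : MeasurableSet (⋂ i, {z : Fin d → ℝ | 0 ≤ z i}) :=
      MeasurableSet.iInter fun i => measurableSet_le measurable_const (by fun_prop)
    have h2 : MeasurableSet {z : Fin d → ℝ | ∑ i, (z i / a i) ^ p i ≤ 1} :=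
      measurableSet_le (by fun_prop) (by fun_prop)
    convert h1.inter h2 using 1
    ext z
    simp
  have hΓ : 0 < Real.Gamma (1 + s) := Real.Gamma_pos_of_pos (by linarith)
  have key : ENNReal.ofReal (Real.Gamma (1 + s)) * ∫⁻ x, dirK a p α 1 x =
      ENNReal.ofReal (∏ j, (a j ^ α j / p j * Real.Gamma (α j / p j))) := by
    rw [← dir_total a p α ha hp hα]
    simp_rw [← dir_inner a p α ha]
    rw [lintegral_lintegral_swap]
    · have : ∀ t ∈ Set.Ioi (0:ℝ),
          ∫⁻ x, ENNReal.ofReal (Real.exp (-t)) * dirK a p α t x =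
          ENNReal.ofReal (Real.exp (-t) * t ^ (1 + s - 1)) * ∫⁻ x, dirK a p α 1 x := by
        intro t ht
        have hK : Measurable (dirK a p α t) :=
          (dirK_measurable a p α).comp (measurable_id.prodMk (measurable_const (a := t)))
        rw [lintegral_const_mul _ hK, dirK_scale a p α ha hp ht, ← mul_assoc,
          ← ENNReal.ofReal_mul (Real.exp_pos _).le, add_sub_cancel_left]
      rw [setLIntegral_congr_fun measurableSet_Ioi this, lintegral_mul_const _ (by fun_prop),
        ← ofReal_integral_eq_lintegral_ofReal, ← Real.Gamma_eq_integral (by linarith)]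
      · exact Real.GammaIntegral_convergent (by linarith)
      · refine (ae_restrict_iff' measurableSet_Ioi).2 (Filter.Eventually.of_forall fun t ht => ?_)
        exact mul_nonneg (Real.exp_pos _).le (Real.rpow_nonneg (le_of_lt ht) _)
    · refine Measurable.aemeasurable ?_
      exact Measurable.mul (by fun_prop) (dirK_measurable a p α)
  rw [integral_eq_lintegral_of_nonneg_ae]
  · rw [← lintegral_indicator hS]
    change (∫⁻ x, dirK a p α 1 x).toReal = _
    have h2 := congrArg ENNReal.toReal key
    rw [ENNReal.toReal_mul, ENNReal.toReal_ofReal hΓ.le, ENNReal.toReal_ofReal] at h2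
    · rw [Finset.prod_mul_distrib, Finset.prod_div_distrib] at h2
      rw [← mul_div_assoc, ← h2, mul_div_cancel_left₀ _ hΓ.ne']
    · refine Finset.prod_nonneg fun j _ => mul_nonneg ?_ ?_
      · exact div_nonneg (Real.rpow_nonneg (ha j).le _) (hp j).le
      · exact (Real.Gamma_pos_of_pos (div_pos (hα j) (hp j))).le
  · refine (ae_restrict_iff' hS).2 (Filter.Eventually.of_forall fun x hx => ?_)
    exact Finset.prod_nonneg fun j _ => Real.rpow_nonneg (hx.1 j) _
  · exact Measurable.aestronglyMeasurable (by fun_prop)
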